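/- Any dg algebra A over a commutative ring k is strongly homotopy equivalent to A ⊗ I*, where I* is the normalized cochain dg algebra of the singular simplicial set of [0,1]; in particular I* is strongly homotopy equivalent to k. -/

import Mathlib

open DirectSum

/-- A (cohomologically graded) differential graded algebra over a commutative ring `k`:
a `ℤ`-graded `k`-algebra equipped with a square-zero degree `+1` differential
satisfying the graded Leibniz rule. -/
structure DGA (k : Type) [CommRing k] : Type 1 where
  A : Type
  [ringA : Ring A]
  [algA : Algebra k A]
  gr : ℤ → Submodule k A
  [gradedA : GradedRing gr]
  d : A →ₗ[k] A
  d_sq : ∀ a, d (d a) = 0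
  d_mem : ∀ (i : ℤ), ∀ a ∈ gr i, d a ∈ gr (i + 1)
  leibniz : ∀ (i : ℤ), ∀ a ∈ gr i, ∀ b, d (a * b) = d a * b + (((-1 : ℤˣ) ^ i : ℤˣ) : ℤ) • (a * d b)

attribute [instance] DGA.ringA DGA.algA DGA.gradedA

namespace DGA

variable {k : Type} [CommRing k]

/-- A Maurer-Cartan element of a dg algebra: a degree `1` element `x` with `d x + x² = 0`. -/
def IsMC (A : DGA k) (x : A.A) : Prop := x ∈ A.gr 1 ∧ A.d x + x * x = 0

/-- The set of Maurer-Cartan elements of `A`. -/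
def MCEl (A : DGA k) : Type := {x : A.A // A.IsMC x}

/-- The gauge action of an invertible element `g` on `x`:  `g·x = g x g⁻¹ - (d g) g⁻¹`. -/
def GaugeAct (A : DGA k) (g : (A.A)ˣ) (x : A.A) : A.A :=
  (g : A.A) * x * ((g⁻¹ : (A.A)ˣ) : A.A) - A.d (g : A.A) * ((g⁻¹ : (A.A)ˣ) : A.A)

/-- Gauge equivalence of elements of a dg algebra: `y = g·x` for some invertible
degree-zero `g`. -/
def GaugeEquiv (A : DGA k) (x y : A.A) : Prop :=
  ∃ g : (A.A)ˣ, (g : A.A) ∈ A.gr 0 ∧ y = A.GaugeAct g x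

/-- The Maurer-Cartan moduli set: Maurer-Cartan elements modulo gauge equivalence. -/
def MCmod (A : DGA k) : Type := Quot (fun x y : A.MCEl => A.GaugeEquiv x.1 y.1)

/-- `a` is cohomologous to `1` in the twisted algebra `A^x` (with differential `d + [x,-]`);
here `a` has degree `0` so the twisted differential of the degree `-1` element `s`
is `d s + x s + s x`. -/
def CohomologousToOne (A : DGA k) (x a : A.A) : Prop :=
  ∃ s ∈ A.gr (-1 : ℤ), a - 1 = A.d s + (x * s + s * x)

/-- Homotopy gauge equivalence of Maurer-Cartan elements: the one-sided twisted modules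
`A^{[x]}` and `A^{[y]}` are homotopy equivalent as right dg `A`-modules, explicitly:
there are degree-zero `g`, `h` intertwining the twisted differentials whose composites
are cohomologous to `1` in `A^x`, resp. `A^y`. -/
def HomotopyGaugeEquiv (A : DGA k) (x y : A.A) : Prop :=
  ∃ g ∈ A.gr 0, ∃ h ∈ A.gr 0,
    A.d g + y * g - g * x = 0 ∧
    A.d h + x * h - h * y = 0 ∧
    A.CohomologousToOne x (h * g) ∧
    A.CohomologousToOne y (g * h)

/-- The Maurer-Cartan homotopy moduli set: MC elements modulo homotopy gauge
equivalence. -/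
def MChmod (A : DGA k) : Type := Quot (fun x y : A.MCEl => A.HomotopyGaugeEquiv x.1 y.1)

open scoped Classical in
/-- The parity (Koszul sign) operator of a graded algebra: `a ↦ Σᵢ (-1)ⁱ aᵢ`. -/
noncomputable def parity (A : DGA k) (a : A.A) : A.A :=
  (DirectSum.decompose A.gr a).sum (fun i x => (((-1 : ℤˣ) ^ i : ℤˣ) : ℤ) • (x : A.A))

end DGA

/-- A morphism of dg algebras: an algebra map preserving the grading and the differential. -/
structure DGAHom {k : Type} [CommRing k] (A B : DGA k) where
  toFun : A.A →ₐ[k] B.A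
  map_gr : ∀ (i : ℤ), ∀ a ∈ A.gr i, toFun a ∈ B.gr i
  map_d : ∀ a, toFun (A.d a) = B.d (toFun a)

namespace DGAHom
variable {k : Type} [CommRing k]

def comp {A B C : DGA k} (g : DGAHom B C) (f : DGAHom A B) : DGAHom A C where
  toFun := g.toFun.comp f.toFun
  map_gr := fun i a ha => g.map_gr i _ (f.map_gr i a ha)
  map_d := fun a => by simp [f.map_d, g.map_d]

def id' (A : DGA k) : DGAHom A A :=
  ⟨AlgHom.id k A.A, fun _ _ h => h, fun _ => rfl⟩

end DGAHom


/-! ## Topological simplices and singular simplices -/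

/-- The standard topological `n`-simplex. -/
def TopSimplex (n : ℕ) : Type :=
  {f : Fin (n + 1) → ℝ // (∀ i, 0 ≤ f i) ∧ ∑ i, f i = 1}

instance (n : ℕ) : TopologicalSpace (TopSimplex n) :=
  inferInstanceAs (TopologicalSpace {f : Fin (n + 1) → ℝ // (∀ i, 0 ≤ f i) ∧ ∑ i, f i = 1})

/-- The affine map of topological simplices induced by a map of vertices. -/
def vertAffine {m n : ℕ} (v : Fin (m + 1) → Fin (n + 1)) :
    C(TopSimplex m, TopSimplex n) where
  toFun f := ⟨fun j => ∑ i ∈ Finset.univ.filter (fun i => v i = j), f.1 i,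
    ⟨fun j => Finset.sum_nonneg fun i _ => f.2.1 i, by
      rw [Finset.sum_fiberwise_of_maps_to (fun i _ => Finset.mem_univ (v i)) f.1]
      exact f.2.2⟩⟩
  continuous_toFun := by
    apply Continuous.subtype_mk
    exact continuous_pi fun j => continuous_finset_sum _ fun i _ =>
      (continuous_apply i).comp continuous_subtype_val

/-- The `i`-th face inclusion of topological simplices. -/
def faceMap {n : ℕ} (i : Fin (n + 2)) : C(TopSimplex n, TopSimplex (n + 1)) :=
  vertAffine fun j => i.succAbove j

/-- The `i`-th degeneracy (collapse) map of topological simplices. -/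
def degenMap {n : ℕ} (i : Fin (n + 1)) : C(TopSimplex (n + 1), TopSimplex n) :=
  vertAffine fun j => i.predAbove j

/-- The inclusion of the front `p`-face of the `n`-simplex. -/
def frontMap (p n : ℕ) (h : p ≤ n) : C(TopSimplex p, TopSimplex n) :=
  vertAffine fun j => Fin.castLE (by omega) j

/-- The inclusion of the back `q`-face of the `n`-simplex. -/
def backMap (q n : ℕ) (h : q ≤ n) : C(TopSimplex q, TopSimplex n) :=
  vertAffine fun j : Fin (q + 1) => (⟨n - q + (j : ℕ), by have := j.isLt; omega⟩ : Fin (n + 1))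

/-- The `j`-th vertex of the topological `n`-simplex. -/
def vertexPt (n : ℕ) (j : Fin (n + 1)) : TopSimplex n :=
  ⟨fun i => if i = j then 1 else 0,
    ⟨fun i => by dsimp only; split <;> norm_num, by simp⟩⟩

/-- The set of singular `n`-simplices of a topological space. -/
def SingN (X : Type) [TopologicalSpace X] (n : ℕ) : Type := C(TopSimplex n, X)

/-- A singular `(n+1)`-simplex is degenerate if it factors through a degeneracy map. -/
def IsDegenSimplex {X : Type} [TopologicalSpace X] {n : ℕ} (σ : SingN X (n + 1)) : Prop :=
  ∃ (i : Fin (n + 1)) (τ : SingN X n), σ = (τ : C(TopSimplex n, X)).comp (degenMap i)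

/-- The constant singular `0`-simplex of `[0,1]` at `0`. -/
def const0 : SingN unitInterval 0 := ContinuousMap.const _ 0

/-- The constant singular `0`-simplex of `[0,1]` at `1`. -/
def const1 : SingN unitInterval 0 := ContinuousMap.const _ 1

/-! ## Strong homotopy of dg algebra morphisms -/

/-- An elementary strong homotopy between two dg algebra maps `f, g : A → B`: a dg
algebra map `H : A → B ⊗ I*` (where `I*` is the normalized singular cochain algebra of
`[0,1]`, the tensor product being completed) restricting to `f` and `g` at the two
endpoints.  `B ⊗ I*` is identified with normalized `B`-valued singular cochains on
`[0,1]`, so `H` is given by its components `H a n σ ∈ B^{i-n}` for `a ∈ A^i` and `σ` a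
singular `n`-simplex; multiplicativity is the Alexander-Whitney convolution formula
with Koszul signs, and compatibility with differentials uses the singular coboundary. -/
def IsElemStrongHomotopy {k : Type} [CommRing k] (A B : DGA k) (f g : A.A → B.A)
    (H : A.A → ∀ n, SingN unitInterval n → B.A) : Prop :=
  (∀ a b n σ, H (a + b) n σ = H a n σ + H b n σ) ∧
  (∀ (c : k) a n σ, H (c • a) n σ = c • H a n σ) ∧
  (∀ a (n : ℕ) (i : Fin (n + 1)) (τ : SingN unitInterval n),
    H a (n + 1) (ContinuousMap.comp τ (degenMap i)) = 0) ∧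
  (∀ (i : ℤ), ∀ a ∈ A.gr i, ∀ (n : ℕ) σ, H a n σ ∈ B.gr (i - (n : ℤ))) ∧
  (∀ σ, H 1 0 σ = 1) ∧ (∀ (n : ℕ) σ, H 1 (n + 1) σ = 0) ∧
  (∀ (i j : ℤ), ∀ a ∈ A.gr i, ∀ b ∈ A.gr j, ∀ (n : ℕ) (σ : SingN unitInterval n),
    H (a * b) n σ =
      ∑ p : Fin (n + 1),
        (((-1 : ℤˣ) ^ (((p : ℕ) : ℤ) * (j - ((n : ℤ) - ((p : ℕ) : ℤ)))) : ℤˣ) : ℤ) •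
          (H a (p : ℕ) (ContinuousMap.comp σ (frontMap (p : ℕ) n (Nat.le_of_lt_succ p.isLt))) *
            H b (n - (p : ℕ)) (ContinuousMap.comp σ (backMap (n - (p : ℕ)) n (by omega))))) ∧
  (∀ (i : ℤ), ∀ a ∈ A.gr i,
    (∀ σ : SingN unitInterval 0, H (A.d a) 0 σ = B.d (H a 0 σ)) ∧
    (∀ (n : ℕ) (σ : SingN unitInterval (n + 1)),
      H (A.d a) (n + 1) σ =
        B.d (H a (n + 1) σ) +
          (((-1 : ℤˣ) ^ (i - (n : ℤ)) : ℤˣ) : ℤ) •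
            ∑ i' : Fin (n + 2), (((-1 : ℤˣ) ^ (i' : ℕ) : ℤˣ) : ℤ) •
              H a n (ContinuousMap.comp σ (faceMap i')))) ∧
  (∀ a, H a 0 const0 = f a ∧ H a 0 const1 = g a)

/-- Two dg algebra morphisms are strongly homotopic if they are related by the
equivalence relation generated by elementary strong homotopies. -/
def StronglyHomotopicHoms {k : Type} [CommRing k] (A B : DGA k) :
    DGAHom A B → DGAHom A B → Prop :=
  Relation.EqvGen (fun f g => ∃ H, IsElemStrongHomotopy A B f.toFun g.toFun H)

/-- Two dg algebras are strongly homotopy equivalent if there are dg algebra maps in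
both directions whose composites are strongly homotopic to the identities. -/
def StronglyHomotopyEquivalent {k : Type} [CommRing k] (A B : DGA k) : Prop :=
  ∃ (f : DGAHom A B) (g : DGAHom B A),
    StronglyHomotopicHoms B B (f.comp g) (DGAHom.id' B) ∧
    StronglyHomotopicHoms A A (g.comp f) (DGAHom.id' A)

/-! ## The trivial dg algebra `k` -/

/-- The trivial grading of `k`, concentrated in degree `0`. -/
def trivGrading (k : Type) [CommRing k] : ℤ → Submodule k k :=
  fun i => if i = 0 then ⊤ else ⊥

instance trivGradedRing (k : Type) [CommRing k] : GradedRing (trivGrading k) where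
  one_mem := by simp [trivGrading]
  mul_mem := by
    intro i j a b ha hb
    by_cases hi : i = 0
    · by_cases hj : j = 0
      · subst hi; subst hj; simp [trivGrading]
      · have hb0 : b = 0 := by simpa [trivGrading, hj] using hb
        simp [hb0]
    · have ha0 : a = 0 := by simpa [trivGrading, hi] using ha
      simp [ha0]
  decompose' := fun x => DirectSum.of (fun i => trivGrading k i) 0 ⟨x, by simp [trivGrading]⟩
  left_inv := fun x => by simp
  right_inv := fun x => by
    induction x using DirectSum.induction_on with
    | zero =>
        simp only [map_zero]
        exact map_zero _
    | of j y =>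
        by_cases hj : j = 0
        · subst hj
          simp only [DirectSum.coeAddMonoidHom_of]
        · have hy : (y : k) = 0 := by simpa [trivGrading, hj] using y.2
          have hy0 : y = 0 := Subtype.ext hy
          subst hy0
          simp only [map_zero]
          exact map_zero _
    | add a b ha hb =>
        have key : (⟨(DirectSum.coeAddMonoidHom (trivGrading k)) (a + b),
            by simp [trivGrading]⟩ : trivGrading k 0) =
            ⟨(DirectSum.coeAddMonoidHom (trivGrading k)) a, by simp [trivGrading]⟩ +
            ⟨(DirectSum.coeAddMonoidHom (trivGrading k)) b, by simp [trivGrading]⟩ :=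
          Subtype.ext (map_add _ _ _)
        exact (congrArg (DirectSum.of (fun i => (trivGrading k i : Submodule k k)) 0) key).trans
          ((map_add _ _ _).trans (congrArg₂ (· + ·) ha hb))

/-- The commutative ring `k` viewed as a dg algebra concentrated in degree `0` with zero
differential. -/
def DGA.triv (k : Type) [CommRing k] : DGA k where
  A := k
  gr := trivGrading k
  d := 0
  d_sq := fun _ => rfl
  d_mem := fun _ _ _ => by simp [trivGrading]
  leibniz := fun i a _ b => by simp

/-! ## Characterization of the completed tensor product `A ⊗ I*` -/

/-- `T` is a realization of `A ⊗ I*`, the (completed) tensor product of a dg algebra `A`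
with the normalized singular cochain algebra `I*` of `[0,1]`:  via component maps `E`,
homogeneous degree-`m` elements of `T` correspond exactly to normalized `A`-valued
singular cochains on `[0,1]` of total degree `m`, compatibly with units, products
(Alexander-Whitney convolution with Koszul signs) and differentials. -/
def IsCochainTensorI {k : Type} [CommRing k] (A T : DGA k) : Prop :=
  ∃ E : T.A → ∀ n : ℕ, SingN unitInterval n → A.A,
    (∀ p q (n : ℕ) σ, E (p + q) n σ = E p n σ + E q n σ) ∧
    (∀ (c : k) p (n : ℕ) σ, E (c • p) n σ = c • E p n σ) ∧
    (∀ p (n : ℕ) (i : Fin (n + 1)) (τ : SingN unitInterval n),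
      E p (n + 1) (ContinuousMap.comp τ (degenMap i)) = 0) ∧
    (∀ (m : ℤ), ∀ p ∈ T.gr m, ∀ (n : ℕ) σ, E p n σ ∈ A.gr (m - (n : ℤ))) ∧
    (∀ (m : ℤ), ∀ p ∈ T.gr m, (∀ (n : ℕ) σ, E p n σ = 0) → p = 0) ∧
    (∀ (m : ℤ) (Y : ∀ n : ℕ, SingN unitInterval n → A.A),
      (∀ (n : ℕ) σ, Y n σ ∈ A.gr (m - (n : ℤ))) →
      (∀ (n : ℕ) (i : Fin (n + 1)) (τ : SingN unitInterval n),
        Y (n + 1) (ContinuousMap.comp τ (degenMap i)) = 0) →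
      ∃ p ∈ T.gr m, ∀ (n : ℕ) σ, E p n σ = Y n σ) ∧
    (∀ σ, E 1 0 σ = 1) ∧ (∀ (n : ℕ) σ, E 1 (n + 1) σ = 0) ∧
    (∀ (i j : ℤ), ∀ p ∈ T.gr i, ∀ q ∈ T.gr j, ∀ (n : ℕ) (σ : SingN unitInterval n),
      E (p * q) n σ =
        ∑ r : Fin (n + 1),
          (((-1 : ℤˣ) ^ (((r : ℕ) : ℤ) * (j - ((n : ℤ) - ((r : ℕ) : ℤ)))) : ℤˣ) : ℤ) •
            (E p (r : ℕ)
                (ContinuousMap.comp σ (frontMap (r : ℕ) n (Nat.le_of_lt_succ r.isLt))) *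
              E q (n - (r : ℕ))
                (ContinuousMap.comp σ (backMap (n - (r : ℕ)) n (by omega))))) ∧
    (∀ (i : ℤ), ∀ p ∈ T.gr i,
      (∀ σ : SingN unitInterval 0, E (T.d p) 0 σ = A.d (E p 0 σ)) ∧
      (∀ (n : ℕ) (σ : SingN unitInterval (n + 1)),
        E (T.d p) (n + 1) σ =
          A.d (E p (n + 1) σ) +
            (((-1 : ℤˣ) ^ (i - (n : ℤ)) : ℤˣ) : ℤ) •
              ∑ i' : Fin (n + 2), (((-1 : ℤˣ) ^ (i' : ℕ) : ℤˣ) : ℤ) •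
                E p n (ContinuousMap.comp σ (faceMap i'))))

/-!
Multiplication `[0,1] × [0,1] → [0,1]` contracts `[0,1]` onto `0`. Accordingly, the inclusion
`A → A ⊗ I*` of constant cochains and evaluation `A ⊗ I* → A` at the point `0` compose to the
identity of `A`, and the other composite is strongly homotopic to the identity of `A ⊗ I*` through
the pullback of cochains along multiplication, followed by the Eilenberg–Zilber shuffle map. This
homotopy sends a cochain `Y` to the cochain whose value at `(ρ, σ)` is the signed sum of `Y` over
the simplices `ρ · σ` along the lattice paths in the product of the domains of `ρ` and `σ`. It is a
map of dg algebras because the shuffle map is a map of complexes and of coalgebras for the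
Alexander–Whitney diagonal; both facts hold already for shuffles of words.
-/

/-! ### Shuffles of words -/

section Words

variable (R : Type*) [Ring R] {α β γ δ M N : Type*} [AddCommGroup M] [Module R M]
  [AddCommGroup N] [Module R N]

/-- The Eilenberg–Zilber shuffle map in dual form: the signed sum of `φ` over the maximal lattice
paths in the grid with rows `w` and columns `l`. At each vertex the path moves down in `w`, with
sign `(-1)` to the number of columns still ahead, or moves right in `l`. An empty word has no
vertices, so a path ends at the corner where both remaining words are empty. -/
def shuffleSum : List α → List β → (List (α × β) → M) →ₗ[R] M
  | [], _ => 0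
  | _ :: _, [] => 0
  | b :: w, a :: l =>
      (if w = [] ∧ l = [] then LinearMap.proj [(b, a)] else 0) +
        ((l.length : ℤ).negOnePow • shuffleSum w (a :: l) + shuffleSum (b :: w) l) ∘ₗ
          LinearMap.funLeft R M (List.cons (b, a))
termination_by w l => w.length + l.length

/-- The boundary of the simplex with vertex word `w`, in dual form: the alternating sum of `φ` over
the words obtained by deleting one letter of `w`. -/
def faceSum : List α → (List α → M) →ₗ[R] M
  | [] => 0
  | b :: w => LinearMap.proj w - faceSum w ∘ₗ LinearMap.funLeft R M (List.cons b)

/-- The Alexander–Whitney diagonal of the simplex with vertex word `L`, in dual form: the sum of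
`Φ` over the ways to cut `L` at a letter, which belongs to both pieces. -/
def cutSum : List α → (List α → List α → M) →ₗ[R] M
  | [] => 0
  | a :: L => LinearMap.proj (φ := fun _ => M) (a :: L) ∘ₗ LinearMap.proj [a] +
      cutSum L ∘ₗ LinearMap.funLeft R (List α → M) (List.cons a)

variable {R}

@[simp] lemma shuffleSum_nil_left (l : List β) (φ : List (α × β) → M) :
    shuffleSum R [] l φ = 0 := by
  simp [shuffleSum]

@[simp] lemma shuffleSum_nil_right (w : List α) (φ : List (α × β) → M) :
    shuffleSum R w [] φ = 0 := by
  cases w <;> simp [shuffleSum]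

lemma shuffleSum_cons_cons (b : α) (w : List α) (a : β) (l : List β) (φ : List (α × β) → M) :
    shuffleSum R (b :: w) (a :: l) φ = (if w = [] ∧ l = [] then φ [(b, a)] else 0) +
      (l.length : ℤ).negOnePow • shuffleSum R w (a :: l) (fun L => φ ((b, a) :: L)) +
      shuffleSum R (b :: w) l (fun L => φ ((b, a) :: L)) := by
  rw [shuffleSum, add_assoc]
  split_ifs <;> rfl

@[simp] lemma faceSum_nil (φ : List α → M) : faceSum R [] φ = 0 := rfl

lemma faceSum_cons (b : α) (w : List α) (φ : List α → M) :
    faceSum R (b :: w) φ = φ w - faceSum R w (fun v => φ (b :: v)) := rfl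

@[simp] lemma cutSum_nil (Φ : List α → List α → M) : cutSum R [] Φ = 0 := rfl

@[simp] lemma cutSum_zero (L : List α) : cutSum R L (fun _ _ => (0 : M)) = 0 :=
  map_zero (cutSum R L)

lemma cutSum_cons (a : α) (L : List α) (Φ : List α → List α → M) :
    cutSum R (a :: L) Φ = Φ [a] (a :: L) + cutSum R L (fun x y => Φ (a :: x) y) := rfl

lemma shuffleSum_mem (P : Submodule R M) {w : List α} {l : List β} {φ : List (α × β) → M}
    (h : ∀ L, L.length + 1 = w.length + l.length → φ L ∈ P) : shuffleSum R w l φ ∈ P := by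
  induction w generalizing l φ with
  | nil => simp
  | cons b w ihw =>
    induction l generalizing φ with
    | nil => simp
    | cons a l ihl =>
      rw [shuffleSum_cons_cons]
      refine add_mem (add_mem ?_ (zsmul_mem (ihw fun L hL => h _ ?_) _)) (ihl fun L hL => h _ ?_)
      · split_ifs with hwl
        · exact h _ (by simp [hwl.1, hwl.2])
        · exact zero_mem P
      all_goals simp only [List.length_cons] at hL ⊢; omega

lemma shuffleSum_eq_zero {w : List α} {l : List β} {φ : List (α × β) → M}
    (h : ∀ L, L.length + 1 = w.length + l.length → φ L = 0) : shuffleSum R w l φ = 0 :=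
  (Submodule.mem_bot R).1 (shuffleSum_mem ⊥ fun L hL => (Submodule.mem_bot R).2 (h L hL))

lemma shuffleSum_congr {w : List α} {l : List β} {φ ψ : List (α × β) → M}
    (h : ∀ L, L.length + 1 = w.length + l.length → φ L = ψ L) :
    shuffleSum R w l φ = shuffleSum R w l ψ := by
  rw [← sub_eq_zero, ← map_sub]
  exact shuffleSum_eq_zero fun L hL => sub_eq_zero.2 (h L hL)

lemma map_shuffleSum (g : M →ₗ[R] N) (w : List α) (l : List β) (φ : List (α × β) → M) :
    g (shuffleSum R w l φ) = shuffleSum R w l (fun L => g (φ L)) := by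
  induction w generalizing l φ with
  | nil => simp
  | cons b w ihw =>
    induction l generalizing φ with
    | nil => simp
    | cons a l ihl => simp [shuffleSum_cons_cons, ihw, ihl, apply_ite g]

lemma shuffleSum_map_map (f : γ → α) (g : δ → β) (w : List γ) (l : List δ)
    (φ : List (α × β) → M) :
    shuffleSum R (w.map f) (l.map g) φ =
      shuffleSum R w l (fun L => φ (L.map (Prod.map f g))) := by
  induction w generalizing l φ with
  | nil => simp
  | cons b w ihw =>
    induction l generalizing φ with
    | nil => simp
    | cons a l ihl =>
      have hw := ihw (a :: l) (fun L => φ ((f b, g a) :: L))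
      have hl := ihl (fun L => φ ((f b, g a) :: L))
      simp only [List.map_cons] at hw hl ⊢
      simp [shuffleSum_cons_cons, hw, hl]

lemma shuffleSum_singleton_left (b : α) {l : List β} (hl : l ≠ []) (φ : List (α × β) → M) :
    shuffleSum R [b] l φ = φ (l.map (Prod.mk b)) := by
  induction l generalizing φ with
  | nil => exact absurd rfl hl
  | cons a l ih =>
    cases l with
    | nil => simp [shuffleSum_cons_cons]
    | cons c l => rw [shuffleSum_cons_cons, ih (by simp)]; simp

lemma shuffleSum_cons_cons_eq_zero {b : α} {w : List α} {a : β} {l : List β}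
    {φ : List (α × β) → M} (h : ∀ L, φ ((b, a) :: L) = 0) :
    shuffleSum R (b :: w) (a :: l) φ = 0 := by
  rw [shuffleSum_cons_cons, shuffleSum_eq_zero fun L _ => h L, shuffleSum_eq_zero fun L _ => h L,
    h []]
  simp

lemma shuffleSum_eq_zero_of_not_isChain_left {w : List α} (hw : ¬ w.IsChain (· ≠ ·)) (l : List β)
    {φ : List (α × β) → M} (h : ∀ L, ¬ L.IsChain (· ≠ ·) → φ L = 0) :
    shuffleSum R w l φ = 0 := by
  induction w generalizing l φ with
  | nil => simp
  | cons b w ihw =>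
    obtain _ | ⟨c, w⟩ := w
    · simp at hw
    induction l generalizing φ with
    | nil => simp
    | cons a l ihl =>
      have hcons (L) (hL : ¬ L.IsChain (· ≠ ·)) : φ ((b, a) :: L) = 0 :=
        h _ (mt List.IsChain.tail hL)
      have hdown : shuffleSum R (c :: w) (a :: l) (fun L => φ ((b, a) :: L)) = 0 := by
        by_cases hcw : (c :: w).IsChain (· ≠ ·)
        · obtain rfl : b = c := by simpa [hcw] using hw
          exact shuffleSum_cons_cons_eq_zero fun L => h _ (by simp)
        · exact ihw hcw _ hcons
      rw [shuffleSum_cons_cons, hdown, ihl hcons]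
      simp

lemma shuffleSum_eq_zero_of_not_isChain_right (w : List α) {l : List β}
    (hl : ¬ l.IsChain (· ≠ ·)) {φ : List (α × β) → M}
    (h : ∀ L, ¬ L.IsChain (· ≠ ·) → φ L = 0) : shuffleSum R w l φ = 0 := by
  induction w generalizing l φ with
  | nil => simp
  | cons b w ihw =>
    induction l generalizing φ with
    | nil => simp
    | cons a l ihl =>
      obtain _ | ⟨c, l⟩ := l
      · simp at hl
      have hcons (L) (hL : ¬ L.IsChain (· ≠ ·)) : φ ((b, a) :: L) = 0 :=
        h _ (mt List.IsChain.tail hL)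
      have hright : shuffleSum R (b :: w) (c :: l) (fun L => φ ((b, a) :: L)) = 0 := by
        by_cases hcl : (c :: l).IsChain (· ≠ ·)
        · obtain rfl : a = c := by simpa [hcl] using hl
          exact shuffleSum_cons_cons_eq_zero fun L => h _ (by simp)
        · exact ihl hcl hcons
      rw [shuffleSum_cons_cons, hright, ihw hl hcons]
      simp

lemma cutSum_congr {Φ Ψ : List α → List α → M} {L : List α}
    (h : ∀ x y, x ≠ [] → x.length + y.length = L.length + 1 → Φ x y = Ψ x y) :
    cutSum R L Φ = cutSum R L Ψ := by
  induction L generalizing Φ Ψ with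
  | nil => rfl
  | cons a L ih =>
    rw [cutSum_cons, cutSum_cons, h [a] (a :: L) (by simp) (by simp; omega)]
    congr 1
    exact ih fun x y _ hL => h _ _ (by simp) (by simp; omega)

lemma faceSum_congr {φ ψ : List α → M} {w : List α}
    (h : ∀ v, v.length + 1 = w.length → φ v = ψ v) : faceSum R w φ = faceSum R w ψ := by
  induction w generalizing φ ψ with
  | nil => rfl
  | cons b w ih =>
    rw [faceSum_cons, faceSum_cons, h w (by simp)]
    congr 1
    exact ih fun v hv => h _ (by simp [hv])

lemma faceSum_ite_eq_nil (x : M) (w : List α) :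
    faceSum R w (fun v => if v = [] then x else 0) = if w.length = 1 then x else 0 := by
  cases w <;> simp [faceSum_cons, ← Pi.zero_def]

lemma faceSum_shuffleSum_cons_left (b : α) (w : List α) (a : β) (l : List β)
    (φ : List (α × β) → M) :
    faceSum R w (fun v => shuffleSum R (b :: v) (a :: l) φ) =
      (if w.length = 1 ∧ l = [] then φ [(b, a)] else 0) +
        (l.length : ℤ).negOnePow •
          faceSum R w (fun v => shuffleSum R v (a :: l) (fun L => φ ((b, a) :: L))) +
        faceSum R w (fun v => shuffleSum R (b :: v) l (fun L => φ ((b, a) :: L))) := by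
  have hcorner : faceSum R w (fun v => if v = [] ∧ l = [] then φ [(b, a)] else 0) =
      if w.length = 1 ∧ l = [] then φ [(b, a)] else 0 := by
    by_cases hl : l = []
    · simp [hl, faceSum_ite_eq_nil]
    · simp [hl, ← Pi.zero_def]
  rw [← hcorner, ← LinearMap.map_smul_of_tower, ← map_add, ← map_add]
  simp only [shuffleSum_cons_cons]
  rfl

lemma faceSum_shuffleSum_cons_right (b : α) (w : List α) (a : β) (l : List β)
    (φ : List (α × β) → M) :
    faceSum R l (fun u => shuffleSum R (b :: w) (a :: u) φ) =
      (if w = [] ∧ l.length = 1 then φ [(b, a)] else 0) -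
        (l.length : ℤ).negOnePow •
          faceSum R l (fun u => shuffleSum R w (a :: u) (fun L => φ ((b, a) :: L))) +
        faceSum R l (fun u => shuffleSum R (b :: w) u (fun L => φ ((b, a) :: L))) := by
  have hcorner : faceSum R l (fun u => if w = [] ∧ u = [] then φ [(b, a)] else 0) =
      if w = [] ∧ l.length = 1 then φ [(b, a)] else 0 := by
    by_cases hw : w = []
    · simp [hw, faceSum_ite_eq_nil]
    · simp [hw, ← Pi.zero_def]
  rw [← hcorner, ← LinearMap.map_smul_of_tower, ← map_sub, ← map_add]
  refine faceSum_congr fun u hu => ?_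
  rw [shuffleSum_cons_cons, ← hu, Nat.cast_succ, Int.negOnePow_succ]
  simp

theorem shuffleSum_faceSum (w : List α) (l : List β) (φ : List (α × β) → M) :
    shuffleSum R w l (fun L => faceSum R L φ) =
      faceSum R l (fun u => shuffleSum R w u φ) -
        (l.length : ℤ).negOnePow • faceSum R w (fun v => shuffleSum R v l φ) +
        if w.length = 1 ∧ l.length = 1 then φ [] else 0 := by
  induction w generalizing l φ with
  | nil => simp [← Pi.zero_def]
  | cons b w ihw =>
    induction l generalizing φ with
    | nil => simp [← Pi.zero_def]
    | cons a l ihl =>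
      set φe : List (α × β) → M := fun L => φ ((b, a) :: L) with hφe
      have hdown : shuffleSum R w (a :: l) (fun L => faceSum R ((b, a) :: L) φ) =
          shuffleSum R w (a :: l) φ - shuffleSum R w (a :: l) (fun L => faceSum R L φe) := by
        rw [← map_sub]; rfl
      have hright : shuffleSum R (b :: w) l (fun L => faceSum R ((b, a) :: L) φ) =
          shuffleSum R (b :: w) l φ - shuffleSum R (b :: w) l (fun L => faceSum R L φe) := by
        rw [← map_sub]; rfl
      rw [shuffleSum_cons_cons, hdown, hright, ihw, ihl, faceSum_cons a l, faceSum_cons a l,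
        faceSum_cons b w, faceSum_cons b w, faceSum_shuffleSum_cons_left,
        faceSum_shuffleSum_cons_right, List.length_cons, Nat.cast_succ, Int.negOnePow_succ]
      obtain h | h := Int.units_eq_one_or (l.length : ℤ).negOnePow <;>
        simp [h, hφe, faceSum_cons] <;> abel

lemma faceSum_ofFn {N : ℕ} (v : Fin (N + 1) → α) (φ : List α → M) :
    faceSum R (List.ofFn v) φ =
      ∑ i : Fin (N + 1), ((-1 : ℤˣ) ^ (i : ℕ)) • φ (List.ofFn fun j => v (i.succAbove j)) := by
  induction N generalizing φ with
  | zero => simp [faceSum_cons]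
  | succ N ih =>
    rw [List.ofFn_succ, faceSum_cons, ih, Fin.sum_univ_succ (n := N + 1), sub_eq_add_neg,
      ← Finset.sum_neg_distrib]
    simp [pow_succ]

lemma cutSum_eq_sum (L : List α) (Φ : List α → List α → M) :
    cutSum R L Φ = ∑ p : Fin L.length, Φ (L.take (p + 1)) (L.drop p) := by
  induction L generalizing Φ with
  | nil => simp
  | cons a L ih => rw [cutSum_cons, ih]; simp [Fin.sum_univ_succ]

lemma cutSum_ofFn {N : ℕ} (v : Fin (N + 1) → α) (Φ : List α → List α → M) :
    cutSum R (List.ofFn v) Φ = ∑ p : Fin (N + 1),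
      Φ (List.ofFn fun j : Fin (p + 1) => v (Fin.castLE (by omega) j))
        (List.ofFn fun j : Fin (N - p + 1) => v ⟨N - (N - p) + j, by omega⟩) := by
  rw [cutSum_eq_sum, ← Fin.sum_congr' _ (List.length_ofFn (f := v)).symm]
  refine Finset.sum_congr rfl fun p _ => ?_
  congr 1
  · refine List.ext_getElem (by simp; omega) fun i _ _ => ?_
    simp [-List.ofFn_succ]
  · refine List.ext_getElem (by simp; omega) fun i _ _ => ?_
    have hi : N - (N - p) + i = p + i := by omega
    simp [-List.ofFn_succ, hi]

variable (R) in
/-- The shuffle map on both factors of a tensor product of cut words, in dual form. The sign is the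
Koszul sign for moving `l₂`, of degree `l₂.length - 1`, past `w₁`, of degree `w₁.length - 1`. -/
def shuffleSumPair (w₁ w₂ : List α) (l₁ l₂ : List β)
    (Φ : List (α × β) → List (α × β) → M) : M :=
  (((w₁.length : ℤ) - 1) * ((l₂.length : ℤ) - 1)).negOnePow •
    shuffleSum R w₁ l₁ fun x => shuffleSum R w₂ l₂ (Φ x)

@[simp] lemma shuffleSumPair_nil_left (w₂ : List α) (l₁ l₂ : List β)
    (Φ : List (α × β) → List (α × β) → M) : shuffleSumPair R [] w₂ l₁ l₂ Φ = 0 := by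
  simp [shuffleSumPair]

@[simp] lemma shuffleSumPair_nil_right (w₁ w₂ : List α) (l₂ : List β)
    (Φ : List (α × β) → List (α × β) → M) : shuffleSumPair R w₁ w₂ [] l₂ Φ = 0 := by
  simp [shuffleSumPair]

lemma shuffleSumPair_cons_cons (b : α) (w₁ w₂ : List α) (a : β) {l₁ l₂ : List β} {n : ℕ}
    (hn : l₁.length + l₂.length = n + 1) (Φ : List (α × β) → List (α × β) → M) :
    shuffleSumPair R (b :: w₁) w₂ (a :: l₁) l₂ Φ =
      (if w₁ = [] ∧ l₁ = [] then shuffleSum R w₂ l₂ (Φ [(b, a)]) else 0) +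
        (n : ℤ).negOnePow •
          shuffleSumPair R w₁ w₂ (a :: l₁) l₂ (fun x => Φ ((b, a) :: x)) +
        shuffleSumPair R (b :: w₁) w₂ l₁ l₂ (fun x => Φ ((b, a) :: x)) := by
  have hsign : ((w₁.length : ℤ) * (l₂.length - 1)).negOnePow * (l₁.length : ℤ).negOnePow =
      (n : ℤ).negOnePow * (((w₁.length : ℤ) - 1) * (l₂.length - 1)).negOnePow := by
    rw [← Int.negOnePow_add, ← Int.negOnePow_add]
    have hn' : (l₁.length : ℤ) + l₂.length = n + 1 := mod_cast hn
    congr 1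
    linear_combination hn'
  simp only [shuffleSumPair, shuffleSum_cons_cons, List.length_cons, Nat.cast_succ,
    add_sub_cancel_right, smul_add, smul_smul, hsign]
  congr 2
  split_ifs with h
  · simp [h.1]
  · simp

lemma cutSum_shuffleSumPair (b : α) (w₁ w₂ : List α) (a : β) (l : List β)
    (Φ : List (α × β) → List (α × β) → M) :
    cutSum R (a :: l) (fun l₁ l₂ => shuffleSumPair R (b :: w₁) w₂ l₁ l₂ Φ) =
      (if w₁ = [] then shuffleSum R w₂ (a :: l) (Φ [(b, a)]) else 0) +
        (l.length : ℤ).negOnePow • cutSum R (a :: l)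
          (fun l₁ l₂ => shuffleSumPair R w₁ w₂ l₁ l₂ fun x => Φ ((b, a) :: x)) +
        cutSum R l (fun l₁ l₂ => shuffleSumPair R (b :: w₁) w₂ l₁ l₂ fun x => Φ ((b, a) :: x)) := by
  have hcut : cutSum R l (fun l₁ l₂ => shuffleSumPair R (b :: w₁) w₂ (a :: l₁) l₂ Φ) =
      (l.length : ℤ).negOnePow • cutSum R l
          (fun l₁ l₂ => shuffleSumPair R w₁ w₂ (a :: l₁) l₂ fun x => Φ ((b, a) :: x)) +
        cutSum R l (fun l₁ l₂ => shuffleSumPair R (b :: w₁) w₂ l₁ l₂ fun x => Φ ((b, a) :: x)) := by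
    rw [← LinearMap.map_smul_of_tower, ← map_add]
    refine cutSum_congr fun x y hx hxy => ?_
    simp [shuffleSumPair_cons_cons b w₁ w₂ a hxy, hx]
  rw [cutSum_cons, cutSum_cons, hcut, shuffleSumPair_cons_cons (n := l.length) _ _ _ _ (by simp)]
  simp [add_assoc]

variable (R) in
/-- The dual form of the composite of the two Alexander–Whitney diagonals on `w` and `l` followed by
the two shuffle maps on the corresponding pieces. -/
def cutShuffleSum (w : List α) (l : List β) (Φ : List (α × β) → List (α × β) → M) : M :=
  cutSum R w fun w₁ w₂ => cutSum R l fun l₁ l₂ => shuffleSumPair R w₁ w₂ l₁ l₂ Φ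

lemma cutShuffleSum_cons_cons (b : α) (w : List α) (a : β) (l : List β)
    (Φ : List (α × β) → List (α × β) → M) :
    cutShuffleSum R (b :: w) (a :: l) Φ = shuffleSum R (b :: w) (a :: l) (Φ [(b, a)]) +
      (l.length : ℤ).negOnePow • cutShuffleSum R w (a :: l) (fun x => Φ ((b, a) :: x)) +
      cutShuffleSum R (b :: w) l (fun x => Φ ((b, a) :: x)) := by
  have hcut : cutSum R w (fun w₁ w₂ => cutSum R (a :: l) fun l₁ l₂ =>
        shuffleSumPair R (b :: w₁) w₂ l₁ l₂ Φ) =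
      (l.length : ℤ).negOnePow • cutShuffleSum R w (a :: l) (fun x => Φ ((b, a) :: x)) +
        cutSum R w (fun w₁ w₂ => cutSum R l fun l₁ l₂ =>
          shuffleSumPair R (b :: w₁) w₂ l₁ l₂ fun x => Φ ((b, a) :: x)) := by
    rw [cutShuffleSum, ← LinearMap.map_smul_of_tower, ← map_add]
    refine cutSum_congr fun x y hx _ => ?_
    simp [cutSum_shuffleSumPair, hx]
  rw [cutShuffleSum, cutSum_cons, hcut, cutSum_shuffleSumPair, cutShuffleSum, cutShuffleSum,
    cutSum_cons b w]
  simp only [↓reduceIte, shuffleSumPair_nil_left, cutSum_zero, smul_zero,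
    add_zero]
  abel

theorem shuffleSum_cutSum (w : List α) (l : List β) (Φ : List (α × β) → List (α × β) → M) :
    shuffleSum R w l (fun L => cutSum R L Φ) = cutShuffleSum R w l Φ := by
  induction w generalizing l Φ with
  | nil => simp [cutShuffleSum]
  | cons b w ihw =>
    induction l generalizing Φ with
    | nil => simp [cutShuffleSum]
    | cons a l ihl =>
      have hcons (v : List α) (u : List β) :
          shuffleSum R v u (fun L => cutSum R ((b, a) :: L) Φ) =
            shuffleSum R v u (fun L => Φ [(b, a)] ((b, a) :: L)) +
              shuffleSum R v u (fun L => cutSum R L fun x => Φ ((b, a) :: x)) := by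
        rw [← map_add]; rfl
      rw [cutShuffleSum_cons_cons, shuffleSum_cons_cons, hcons, hcons, shuffleSum_cons_cons, ihw,
        ihl, cutSum_cons, cutSum_nil, add_zero, smul_add]
      abel

lemma shuffleSum_mul_shuffleSum {S A : Type*} [CommRing S] [Ring A] [Algebra S A] (w₁ w₂ : List α)
    (l₁ l₂ : List β) (φ ψ : List (α × β) → A) :
    shuffleSum S w₁ l₁ φ * shuffleSum S w₂ l₂ ψ =
      shuffleSum S w₁ l₁ fun x => shuffleSum S w₂ l₂ fun y => φ x * ψ y := by
  rw [← LinearMap.mulRight_apply (R := S), map_shuffleSum]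
  refine shuffleSum_congr fun x _ => ?_
  rw [LinearMap.mulRight_apply, ← LinearMap.mulLeft_apply (R := S), map_shuffleSum]
  rfl

end Words

/-! ### Shuffles of singular simplices -/

section Cochains

variable {X M : Type*} [TopologicalSpace X] [AddCommGroup M]

lemma vertAffine_comp {l m n : ℕ} (u : Fin (m + 1) → Fin (n + 1))
    (v : Fin (l + 1) → Fin (m + 1)) :
    (vertAffine u).comp (vertAffine v) = vertAffine fun i => u (v i) := by
  refine ContinuousMap.ext fun t => Subtype.ext (funext fun j => ?_)
  change ∑ i with u i = j, ∑ i' with v i' = i, t.1 i' = ∑ i' with u (v i') = j, t.1 i'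
  rw [← Finset.sum_fiberwise_of_maps_to (t := Finset.univ.filter (u · = j)) (g := v) (by simp)]
  refine Finset.sum_congr rfl fun i hi => Finset.sum_congr ?_ fun _ _ => rfl
  grind

lemma vertAffine_id (n : ℕ) : vertAffine (fun i : Fin (n + 1) => i) = ContinuousMap.id _ := by
  refine ContinuousMap.ext fun t => Subtype.ext (funext fun j => ?_)
  change ∑ i with i = j, t.1 i = t.1 j
  simp [Finset.sum_filter]

variable (X M) in
/-- Singular cochains of the space `X` with values in `M`, of all degrees simultaneously. -/
abbrev SingularCochain := ∀ n : ℕ, C(TopSimplex n, X) → M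

/-- A cochain is normalized if it vanishes on degenerate simplices. -/
def SingularCochain.IsNormalized (Y : SingularCochain X M) : Prop :=
  ∀ (n : ℕ) (i : Fin (n + 1)) (τ : C(TopSimplex n, X)), Y (n + 1) (τ.comp (degenMap i)) = 0

/-- The cochain with value `a` on every point and `0` on simplices of positive dimension. -/
def constCochain (a : M) : SingularCochain X M
  | 0, _ => a
  | _ + 1, _ => 0

/-- The singular coboundary, without any Koszul sign. -/
def coboundary (Y : SingularCochain X M) : SingularCochain X M
  | 0, _ => 0
  | n + 1, σ => ∑ i : Fin (n + 2), ((-1 : ℤˣ) ^ (i : ℕ)) • Y n (σ.comp (faceMap i))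

/-- The Alexander–Whitney product of cochains with values in a graded ring. The Koszul sign is the
one for a second factor `Z` of total degree `j`, whose value on an `n`-simplex then has degree
`j - n`. -/
def cupProduct {A : Type*} [Ring A] (j : ℤ) (Y Z : SingularCochain X A) : SingularCochain X A :=
  fun n σ => ∑ p : Fin (n + 1), ((p : ℤ) * (j - ((n : ℤ) - p))).negOnePow •
    (Y p (σ.comp (frontMap p n (Nat.le_of_lt_succ p.isLt))) *
      Z (n - p) (σ.comp (backMap (n - p) n (by omega))))

lemma constCochain_of_ne_zero {n : ℕ} (hn : n ≠ 0) (a : M) (σ : C(TopSimplex n, X)) :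
    constCochain a n σ = 0 := by
  cases n with
  | zero => exact absurd rfl hn
  | succ n => rfl

lemma map_coboundary {M' : Type*} [AddCommGroup M'] (g : M →+ M') (Y : SingularCochain X M) (n : ℕ)
    (σ : C(TopSimplex n, X)) : g (coboundary Y n σ) = coboundary (fun m τ => g (Y m τ)) n σ := by
  cases n with
  | zero => exact map_zero g
  | succ n => simp [coboundary, Units.smul_def]

lemma coboundary_constCochain (a : M) : coboundary (constCochain (X := X) a) = 0 := by
  funext n σ
  match n with
  | 0 => rfl
  | 1 => simp [coboundary, constCochain]
  | n + 2 => simp [coboundary, constCochain]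

lemma cupProduct_zero {A : Type*} [Ring A] (j : ℤ) (Y Z : SingularCochain X A)
    (x : C(TopSimplex 0, X)) : cupProduct j Y Z 0 x = Y 0 x * Z 0 x := by
  have hid (v : Fin 1 → Fin 1) : vertAffine v = ContinuousMap.id _ := by
    rw [← vertAffine_id, Subsingleton.elim v fun i => i]
  simp [cupProduct, frontMap, backMap, hid]

lemma cupProduct_constCochain {A : Type*} [Ring A] (j : ℤ) (a b : A) :
    cupProduct j (constCochain (X := X) a) (constCochain b) = constCochain (a * b) := by
  funext n σ
  cases n with
  | zero => exact cupProduct_zero ..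
  | succ n =>
    refine Finset.sum_eq_zero fun p _ => ?_
    obtain hp | hp : (p : ℕ) ≠ 0 ∨ n + 1 - p ≠ 0 := by omega
    · rw [constCochain_of_ne_zero hp, zero_mul, smul_zero]
    · rw [constCochain_of_ne_zero hp, mul_zero, smul_zero]

variable [Mul X] [ContinuousMul X]

/-- The simplex of `X` obtained by multiplying `ρ` and `σ` along a sequence `v` of vertices of the
product of their domains. -/
def pathSimplex {n m N : ℕ} (ρ : C(TopSimplex n, X)) (σ : C(TopSimplex m, X))
    (v : Fin (N + 1) → Fin (n + 1) × Fin (m + 1)) : C(TopSimplex N, X) :=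
  ρ.comp (vertAffine fun i => (v i).1) * σ.comp (vertAffine fun i => (v i).2)

section PathSimplex

variable {n m N n' m' N' : ℕ} (ρ : C(TopSimplex n, X)) (σ : C(TopSimplex m, X))

lemma pathSimplex_comp_vertAffine (v : Fin (N + 1) → Fin (n + 1) × Fin (m + 1))
    (f : Fin (N' + 1) → Fin (N + 1)) :
    (pathSimplex ρ σ v).comp (vertAffine f) = pathSimplex ρ σ fun i => v (f i) := by
  rw [pathSimplex, pathSimplex, ← vertAffine_comp (fun i => (v i).1) f,
    ← vertAffine_comp (fun i => (v i).2) f]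
  rfl

lemma pathSimplex_vertAffine (f : Fin (n' + 1) → Fin (n + 1)) (g : Fin (m' + 1) → Fin (m + 1))
    (v : Fin (N + 1) → Fin (n' + 1) × Fin (m' + 1)) :
    pathSimplex (ρ.comp (vertAffine f)) (σ.comp (vertAffine g)) v =
      pathSimplex ρ σ fun i => Prod.map f g (v i) := by
  simp only [pathSimplex, Prod.map, ContinuousMap.comp_assoc, vertAffine_comp]

end PathSimplex

variable (R : Type*) [Ring R] [Module R M]

/-- Evaluation of cochains on a simplex. -/
def evalSimplex {n : ℕ} (σ : C(TopSimplex n, X)) : SingularCochain X M →ₗ[R] M where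
  toFun Y := Y n σ
  map_add' _ _ := rfl
  map_smul' _ _ := rfl

/-- Evaluation of cochains on the product of `ρ` and `σ` along a path of vertices, with value `0` on
the empty path. -/
def evalPath {n m : ℕ} (ρ : C(TopSimplex n, X)) (σ : C(TopSimplex m, X)) :
    List (Fin (n + 1) × Fin (m + 1)) → SingularCochain X M →ₗ[R] M
  | [] => 0
  | e :: L => evalSimplex R (pathSimplex ρ σ (e :: L).get)

/-- The pullback of cochains along multiplication `X × X → X` followed by the Eilenberg–Zilber
shuffle map, evaluated on `ρ` in the first factor. The value on `σ` is the signed sum over the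
lattice paths from `(0, 0)` to `(n, m)`. -/
def shufflePullback {n : ℕ} (ρ : C(TopSimplex n, X)) :
    SingularCochain X M →ₗ[R] SingularCochain X M :=
  LinearMap.pi fun m => LinearMap.pi fun σ =>
    shuffleSum R (List.finRange (n + 1)) (List.finRange (m + 1)) ∘ₗ LinearMap.pi (evalPath R ρ σ)

variable {R}

section EvalPath

variable {n m : ℕ} (ρ : C(TopSimplex n, X)) (σ : C(TopSimplex m, X))

@[simp] lemma evalPath_nil (Y : SingularCochain X M) : evalPath R ρ σ [] Y = 0 := rfl

lemma evalPath_of_length_eq {L : List (Fin (n + 1) × Fin (m + 1))} {N : ℕ}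
    (h : L.length = N + 1) (Y : SingularCochain X M) :
    evalPath R ρ σ L Y = Y N (pathSimplex ρ σ fun i => L.get (i.cast h.symm)) := by
  cases L with
  | nil => simp at h
  | cons e L =>
    obtain rfl : L.length = N := by simpa using h
    rfl

lemma evalPath_ofFn {N : ℕ} (v : Fin (N + 1) → Fin (n + 1) × Fin (m + 1))
    (Y : SingularCochain X M) : evalPath R ρ σ (List.ofFn v) Y = Y N (pathSimplex ρ σ v) := by
  rw [evalPath_of_length_eq ρ σ (List.length_ofFn (f := v))]
  congr 2
  funext i
  simp [-List.ofFn_succ]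

lemma evalPath_mem {P : Submodule R M} {Y : SingularCochain X M} {N : ℕ} (hY : ∀ τ, Y N τ ∈ P)
    {L : List (Fin (n + 1) × Fin (m + 1))} (hL : L.length = N + 1) :
    evalPath R ρ σ L Y ∈ P := by
  rw [evalPath_of_length_eq ρ σ hL]
  exact hY _

lemma exists_eq_ofFn_succ {α : Type*} {L : List α} (hL : L ≠ []) :
    ∃ (N : ℕ) (v : Fin (N + 1) → α), L = List.ofFn v := by
  obtain ⟨a, L, rfl⟩ := List.exists_cons_of_ne_nil hL
  exact ⟨L.length, (a :: L).get, (List.ofFn_get _).symm⟩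

lemma evalPath_comp_vertAffine {n' m' : ℕ} (f : Fin (n' + 1) → Fin (n + 1))
    (g : Fin (m' + 1) → Fin (m + 1)) (L : List (Fin (n' + 1) × Fin (m' + 1)))
    (Y : SingularCochain X M) :
    evalPath R (ρ.comp (vertAffine f)) (σ.comp (vertAffine g)) L Y =
      evalPath R ρ σ (L.map (Prod.map f g)) Y := by
  obtain rfl | hL := eq_or_ne L []
  · rfl
  obtain ⟨N, v, rfl⟩ := exists_eq_ofFn_succ hL
  rw [evalPath_ofFn, pathSimplex_vertAffine, List.map_ofFn, evalPath_ofFn]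
  rfl

lemma map_evalPath {M' : Type*} [AddCommGroup M'] [Module R M'] (g : M →ₗ[R] M')
    (L : List (Fin (n + 1) × Fin (m + 1))) (Y : SingularCochain X M) :
    g (evalPath R ρ σ L Y) = evalPath R ρ σ L fun N τ => g (Y N τ) := by
  cases L with
  | nil => exact map_zero g
  | cons => rfl

lemma apply_succAbove_predAbove {α : Type*} {N : ℕ} {v : Fin (N + 2) → α} {i : Fin (N + 1)}
    (h : v i.castSucc = v i.succ) (j : Fin (N + 2)) :
    v (i.succ.succAbove (i.predAbove j)) = v j := by
  obtain rfl | hj := eq_or_ne j i.succ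
  · rw [Fin.predAbove_succ_self, Fin.succAbove_succ_self, h]
  · rw [Fin.succ_succAbove_predAbove hj]

lemma SingularCochain.IsNormalized.evalPath_eq_zero {Y : SingularCochain X M}
    (hY : Y.IsNormalized) {L : List (Fin (n + 1) × Fin (m + 1))} (hL : ¬ L.IsChain (· ≠ ·)) :
    evalPath R ρ σ L Y = 0 := by
  obtain rfl | hL' := eq_or_ne L []
  · rfl
  obtain ⟨N, v, rfl⟩ := exists_eq_ofFn_succ hL'
  rw [List.isChain_ofFn] at hL
  push Not at hL
  obtain ⟨i, hi, hv⟩ := hL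
  obtain ⟨N, rfl⟩ : ∃ K, N = K + 1 := ⟨N - 1, by omega⟩
  have hv' := apply_succAbove_predAbove (i := ⟨i, by omega⟩) hv
  rw [evalPath_ofFn, ← funext hv',
    ← pathSimplex_comp_vertAffine ρ σ (fun j => v (Fin.succAbove _ j)) (Fin.predAbove _)]
  exact hY _ _ _

lemma evalPath_coboundary (L : List (Fin (n + 1) × Fin (m + 1))) (Y : SingularCochain X M) :
    evalPath R ρ σ L (coboundary Y) = faceSum R L fun v => evalPath R ρ σ v Y := by
  obtain rfl | hL := eq_or_ne L []
  · rfl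
  obtain ⟨N, v, rfl⟩ := exists_eq_ofFn_succ hL
  rw [evalPath_ofFn]
  cases N with
  | zero => simp [coboundary, faceSum_cons]
  | succ N =>
    rw [faceSum_ofFn, coboundary]
    refine Finset.sum_congr rfl fun i _ => ?_
    rw [evalPath_ofFn, faceMap, pathSimplex_comp_vertAffine]

lemma evalPath_cupProduct {S A : Type*} [CommRing S] [Ring A] [Algebra S A] (j : ℤ)
    (Y Z : SingularCochain X A) (L : List (Fin (n + 1) × Fin (m + 1))) :
    evalPath S ρ σ L (cupProduct j Y Z) = cutSum S L fun x y =>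
      (((x.length : ℤ) - 1) * (j - ((y.length : ℤ) - 1))).negOnePow •
        (evalPath S ρ σ x Y * evalPath S ρ σ y Z) := by
  obtain rfl | hL := eq_or_ne L []
  · rfl
  obtain ⟨N, v, rfl⟩ := exists_eq_ofFn_succ hL
  rw [evalPath_ofFn, cutSum_ofFn, cupProduct]
  refine Finset.sum_congr rfl fun p _ => ?_
  have hp : (p : ℕ) ≤ N := Nat.le_of_lt_succ p.isLt
  rw [evalPath_ofFn, evalPath_ofFn, List.length_ofFn, List.length_ofFn, frontMap, backMap,
    pathSimplex_comp_vertAffine, pathSimplex_comp_vertAffine, Nat.cast_succ, Nat.cast_succ,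
    Nat.cast_sub hp, add_sub_cancel_right, add_sub_cancel_right]

end EvalPath

section ShufflePullback

variable {n m : ℕ} (ρ : C(TopSimplex n, X)) (σ : C(TopSimplex m, X))

lemma shufflePullback_apply (Y : SingularCochain X M) :
    shufflePullback R ρ Y m σ =
      shuffleSum R (List.finRange (n + 1)) (List.finRange (m + 1)) (evalPath R ρ σ · Y) := rfl

lemma shufflePullback_comp_vertAffine {n' m' : ℕ} (f : Fin (n' + 1) → Fin (n + 1))
    (g : Fin (m' + 1) → Fin (m + 1)) (Y : SingularCochain X M) :
    shufflePullback R (ρ.comp (vertAffine f)) Y m' (σ.comp (vertAffine g)) =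
      shuffleSum R (List.ofFn f) (List.ofFn g) (evalPath R ρ σ · Y) := by
  simp only [shufflePullback_apply, evalPath_comp_vertAffine]
  rw [List.ofFn_eq_map, List.ofFn_eq_map, shuffleSum_map_map]

lemma shufflePullback_comp_vertAffine_left {n' : ℕ} (f : Fin (n' + 1) → Fin (n + 1))
    (Y : SingularCochain X M) :
    shufflePullback R (ρ.comp (vertAffine f)) Y m σ =
      shuffleSum R (List.ofFn f) (List.finRange (m + 1)) (evalPath R ρ σ · Y) := by
  rw [← List.ofFn_id (m + 1), ← shufflePullback_comp_vertAffine]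
  exact congrArg (shufflePullback R _ Y m) (congrArg σ.comp (vertAffine_id m).symm)

lemma shufflePullback_comp_vertAffine_right {m' : ℕ} (g : Fin (m' + 1) → Fin (m + 1))
    (Y : SingularCochain X M) :
    shufflePullback R ρ Y m' (σ.comp (vertAffine g)) =
      shuffleSum R (List.finRange (n + 1)) (List.ofFn g) (evalPath R ρ σ · Y) := by
  rw [← List.ofFn_id (n + 1), ← shufflePullback_comp_vertAffine]
  exact congrArg (shufflePullback R · Y _ _) (congrArg ρ.comp (vertAffine_id n).symm)

lemma shufflePullback_mem {P : Submodule R M} {Y : SingularCochain X M}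
    (hY : ∀ τ, Y (n + m) τ ∈ P) : shufflePullback R ρ Y m σ ∈ P :=
  shuffleSum_mem P fun L hL => evalPath_mem ρ σ hY <| by
    simp only [List.length_finRange] at hL; omega

lemma shufflePullback_congr {Y Z : SingularCochain X M} (h : ∀ τ, Y (n + m) τ = Z (n + m) τ) :
    shufflePullback R ρ Y m σ = shufflePullback R ρ Z m σ := by
  rw [← sub_eq_zero, ← Pi.sub_apply, ← Pi.sub_apply, ← map_sub, ← Submodule.mem_bot R]
  exact shufflePullback_mem ρ σ fun τ => (Submodule.mem_bot R).2 (sub_eq_zero.2 (h τ))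

lemma map_shufflePullback {M' : Type*} [AddCommGroup M'] [Module R M'] (g : M →ₗ[R] M')
    (Y : SingularCochain X M) :
    g (shufflePullback R ρ Y m σ) = shufflePullback R ρ (fun N τ => g (Y N τ)) m σ := by
  simp only [shufflePullback_apply, map_shuffleSum, map_evalPath]

theorem shufflePullback_coboundary (Y : SingularCochain X M) :
    shufflePullback R ρ (coboundary Y) m σ =
      coboundary (shufflePullback R ρ Y) m σ +
        (m : ℤ).negOnePow • coboundary (fun _ ρ' => shufflePullback R ρ' Y m σ) n ρ := by
  have hσ : faceSum R (List.finRange (m + 1))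
      (fun u => shuffleSum R (List.finRange (n + 1)) u (evalPath R ρ σ · Y)) =
        coboundary (shufflePullback R ρ Y) m σ := by
    cases m with
    | zero => rw [← List.ofFn_id, faceSum_ofFn]; simp [coboundary]
    | succ m =>
      rw [← List.ofFn_id, faceSum_ofFn, coboundary]
      simp only [faceMap, shufflePullback_comp_vertAffine_right, id]
  have hρ : faceSum R (List.finRange (n + 1))
      (fun u => shuffleSum R u (List.finRange (m + 1)) (evalPath R ρ σ · Y)) =
        coboundary (fun _ ρ' => shufflePullback R ρ' Y m σ) n ρ := by
    cases n with
    | zero => rw [← List.ofFn_id, faceSum_ofFn]; simp [coboundary]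
    | succ n =>
      rw [← List.ofFn_id (n + 1 + 1), faceSum_ofFn, coboundary]
      simp only [faceMap, shufflePullback_comp_vertAffine_left, id]
  simp only [shufflePullback_apply ρ σ, evalPath_coboundary, shuffleSum_faceSum, hσ, hρ,
    evalPath_nil, ite_self, add_zero, List.length_finRange, Nat.cast_succ, Int.negOnePow_succ,
    Units.neg_smul, sub_neg_eq_add]

lemma shuffleSumPair_evalPath_mul_evalPath {S A : Type*} [CommRing S] [Ring A] [Algebra S A]
    {n₁ n₂ m₁ m₂ : ℕ} (f₁ : Fin (n₁ + 1) → Fin (n + 1)) (f₂ : Fin (n₂ + 1) → Fin (n + 1))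
    (g₁ : Fin (m₁ + 1) → Fin (m + 1)) (g₂ : Fin (m₂ + 1) → Fin (m + 1)) (j : ℤ)
    (Y Z : SingularCochain X A) :
    shuffleSumPair S (List.ofFn f₁) (List.ofFn f₂) (List.ofFn g₁) (List.ofFn g₂) (fun x y =>
        (((x.length : ℤ) - 1) * (j - ((y.length : ℤ) - 1))).negOnePow •
          (evalPath S ρ σ x Y * evalPath S ρ σ y Z)) =
      (n₁ * m₂ + (n₁ + m₁) * (j - (n₂ + m₂)) : ℤ).negOnePow •
        (shufflePullback S (ρ.comp (vertAffine f₁)) Y _ (σ.comp (vertAffine g₁)) *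
          shufflePullback S (ρ.comp (vertAffine f₂)) Z _ (σ.comp (vertAffine g₂))) := by
  rw [shufflePullback_comp_vertAffine, shufflePullback_comp_vertAffine, shuffleSum_mul_shuffleSum,
    shuffleSumPair, Int.negOnePow_add, mul_smul]
  simp only [List.length_ofFn, Nat.cast_succ, add_sub_cancel_right]
  congr 1
  rw [← LinearMap.map_smul_of_tower]
  refine shuffleSum_congr fun x hx => ?_
  rw [Pi.smul_apply, ← LinearMap.map_smul_of_tower]
  refine shuffleSum_congr fun y hy => ?_
  rw [List.length_ofFn, List.length_ofFn] at hx hy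
  have hx' : (x.length : ℤ) - 1 = n₁ + m₁ := by omega
  have hy' : (y.length : ℤ) - 1 = n₂ + m₂ := by omega
  rw [Pi.smul_apply, hx', hy']

theorem shufflePullback_cupProduct {S A : Type*} [CommRing S] [Ring A] [Algebra S A] (j : ℤ)
    (Y Z : SingularCochain X A) :
    shufflePullback S ρ (cupProduct j Y Z) = ∑ p : Fin (n + 1),
      ((p : ℤ) * (j - ((n : ℤ) - p))).negOnePow •
        cupProduct (j - ((n : ℤ) - p))
          (shufflePullback S (ρ.comp (frontMap p n (Nat.le_of_lt_succ p.isLt))) Y)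
          (shufflePullback S (ρ.comp (backMap (n - p) n (by omega))) Z) := by
  funext m σ
  simp only [Finset.sum_apply, Pi.smul_apply]
  simp only [shufflePullback_apply ρ σ, evalPath_cupProduct, shuffleSum_cutSum, cutShuffleSum]
  rw [← List.ofFn_id (n + 1), ← List.ofFn_id (m + 1), cutSum_ofFn]
  refine Finset.sum_congr rfl fun p _ => ?_
  rw [cutSum_ofFn, cupProduct, Finset.smul_sum]
  refine Finset.sum_congr rfl fun q _ => ?_
  rw [shuffleSumPair_evalPath_mul_evalPath, smul_smul, ← Int.negOnePow_add,
    Nat.cast_sub (Nat.le_of_lt_succ p.isLt), Nat.cast_sub (Nat.le_of_lt_succ q.isLt)]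
  congr 2
  ring

lemma not_isChain_ofFn_predAbove {N : ℕ} (i : Fin (N + 1)) :
    ¬ (List.ofFn i.predAbove).IsChain (· ≠ ·) := fun h =>
  List.isChain_ofFn.1 h i (by omega) <|
    (Fin.predAbove_castSucc_self i).trans (Fin.predAbove_succ_self i).symm

lemma SingularCochain.IsNormalized.shufflePullback_left {Y : SingularCochain X M}
    (hY : Y.IsNormalized) :
    SingularCochain.IsNormalized fun _ ρ' => shufflePullback R ρ' Y := fun _ i ρ =>
  funext fun _ => funext fun σ => (shufflePullback_comp_vertAffine_left ρ σ _ Y).trans <|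
    shuffleSum_eq_zero_of_not_isChain_left (not_isChain_ofFn_predAbove i) _ fun _ =>
      hY.evalPath_eq_zero ρ σ

lemma SingularCochain.IsNormalized.shufflePullback_right {Y : SingularCochain X M}
    (hY : Y.IsNormalized) : (shufflePullback R ρ Y).IsNormalized := fun _ i σ =>
  (shufflePullback_comp_vertAffine_right ρ σ _ Y).trans <|
    shuffleSum_eq_zero_of_not_isChain_right _ (not_isChain_ofFn_predAbove i) fun _ =>
      hY.evalPath_eq_zero ρ σ

lemma shufflePullback_zero_left (ρ : C(TopSimplex 0, X)) (Y : SingularCochain X M) :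
    shufflePullback R ρ Y m σ = Y m (pathSimplex ρ σ fun j => (0, j)) := by
  rw [shufflePullback_apply, ← List.ofFn_id (m + 1)]
  exact (shuffleSum_singleton_left 0 (by simp) _).trans
    ((congrArg (evalPath R ρ σ · Y) List.map_ofFn).trans (evalPath_ofFn ρ σ _ Y))

lemma shufflePullback_constCochain (a : M) :
    shufflePullback R ρ (constCochain a) = constCochain (constCochain a) n ρ := by
  funext m σ
  cases n with
  | zero => rw [shufflePullback_zero_left]; cases m <;> rfl
  | succ n =>
    refine (Submodule.mem_bot R).1 (shufflePullback_mem ρ σ fun τ => ?_)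
    rw [Submodule.mem_bot, constCochain_of_ne_zero (by omega)]

end ShufflePullback

lemma shufflePullback_const_one {X : Type*} [TopologicalSpace X] [MulOneClass X] [ContinuousMul X]
    (Y : SingularCochain X M) :
    shufflePullback R (ContinuousMap.const (TopSimplex 0) 1) Y = Y := by
  funext m σ
  rw [shufflePullback_zero_left, pathSimplex, vertAffine_id]
  exact congrArg (Y m) (one_mul σ)

lemma SingularCochain.IsNormalized.shufflePullback_const_zero {X : Type*} [TopologicalSpace X]
    [MulZeroClass X] [ContinuousMul X] {Y : SingularCochain X M} (hY : Y.IsNormalized) :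
    shufflePullback R (ContinuousMap.const (TopSimplex 0) 0) Y =
      constCochain (Y 0 (ContinuousMap.const _ 0)) := by
  funext m σ
  have hzero : pathSimplex (ContinuousMap.const (TopSimplex 0) 0) σ (fun j => (0, j)) =
      ContinuousMap.const _ 0 := ContinuousMap.ext fun _ => zero_mul _
  rw [shufflePullback_zero_left, hzero]
  cases m with
  | zero => rfl
  | succ m => exact hY m 0 (ContinuousMap.const _ 0)

end Cochains

/-! ### The contraction of `A ⊗ I*` -/

section DGAlgebras

variable {k : Type} [CommRing k] {A B T : DGA k}

lemma DGA.linearMap_ext {M : Type*} [AddCommMonoid M] [Module k M] {u v : A.A →ₗ[k] M}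
    (h : ∀ i, ∀ a ∈ A.gr i, u a = v a) : u = v :=
  DirectSum.decompose_lhom_ext A.gr fun i => LinearMap.ext fun a => h i a a.2

lemma DGAHom.ext {f g : DGAHom A B} (h : ∀ a, f.toFun a = g.toFun a) : f = g := by
  obtain ⟨f, _, _⟩ := f
  obtain ⟨g, _, _⟩ := g
  congr
  exact AlgHom.ext h

/-- A morphism of dg algebras given by a linear map for which compatibility with products and
differentials is only required on homogeneous elements. -/
def DGAHom.ofHomogeneous (f : A.A →ₗ[k] B.A) (map_gr : ∀ i, ∀ a ∈ A.gr i, f a ∈ B.gr i)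
    (map_one : f 1 = 1)
    (map_mul : ∀ i j, ∀ a ∈ A.gr i, ∀ b ∈ A.gr j, f (a * b) = f a * f b)
    (map_d : ∀ i, ∀ a ∈ A.gr i, f (A.d a) = B.d (f a)) : DGAHom A B where
  toFun := AlgHom.ofLinearMap f map_one fun a b =>
    have hmul : LinearMap.compr₂ (LinearMap.mul k A.A) f =
        LinearMap.compl₁₂ (LinearMap.mul k B.A) f f :=
      DGA.linearMap_ext fun i a ha => DGA.linearMap_ext fun j b hb => map_mul i j a ha b hb
    LinearMap.congr_fun₂ hmul a b
  map_gr := map_gr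
  map_d := LinearMap.congr_fun (DGA.linearMap_ext (u := f ∘ₗ A.d) (v := B.d ∘ₗ f) map_d)

lemma DGA.map_mem {M : Type*} [AddCommMonoid M] [Module k M] {P : Submodule k M}
    {u : A.A →ₗ[k] M} (h : ∀ i, ∀ a ∈ A.gr i, u a ∈ P) (a : A.A) : u a ∈ P := by
  induction a using DirectSum.Decomposition.inductionOn A.gr with
  | zero => simp
  | homogeneous a => exact h _ a a.2
  | add a b ha hb => rw [map_add]; exact add_mem ha hb

lemma StronglyHomotopyEquivalent.symm (h : StronglyHomotopyEquivalent A B) :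
    StronglyHomotopyEquivalent B A := by
  obtain ⟨f, g, hfg, hgf⟩ := h
  exact ⟨g, f, hgf, hfg⟩

variable (A) in
/-- The degree `m` part of `A ⊗ I*`: normalized singular cochains on `[0,1]` with values in `A`, of
total degree `m`. -/
def normalizedCochains (m : ℤ) : Submodule k (SingularCochain unitInterval A.A) where
  carrier := {Y | Y.IsNormalized ∧ ∀ (n : ℕ) σ, Y n σ ∈ A.gr (m - n)}
  zero_mem' := ⟨fun _ _ _ => rfl, fun _ _ => zero_mem _⟩
  add_mem' := fun hY hZ =>
    ⟨fun n i τ => by rw [Pi.add_apply, Pi.add_apply, hY.1, hZ.1, add_zero],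
      fun n σ => add_mem (hY.2 n σ) (hZ.2 n σ)⟩
  smul_mem' := fun c _ hY =>
    ⟨fun n i τ => by rw [Pi.smul_apply, Pi.smul_apply, hY.1, smul_zero],
      fun n σ => Submodule.smul_mem _ c (hY.2 n σ)⟩

variable (A) in
/-- The differential of `A ⊗ I*` on cochains of total degree `i`, with the Koszul sign
`(-1) ^ (i - n + 1)` on the coboundary landing in simplicial degree `n`. -/
def cochainDifferential (i : ℤ) (Y : SingularCochain unitInterval A.A) :
    SingularCochain unitInterval A.A :=
  fun n σ => A.d (Y n σ) + (i - n + 1).negOnePow • coboundary Y n σ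

lemma cochainDifferential_zero (i : ℤ) (Y : SingularCochain unitInterval A.A)
    (σ : C(TopSimplex 0, unitInterval)) : cochainDifferential A i Y 0 σ = A.d (Y 0 σ) := by
  simp [cochainDifferential, coboundary]

lemma cochainDifferential_succ (i : ℤ) (Y : SingularCochain unitInterval A.A) (n : ℕ)
    (σ : C(TopSimplex (n + 1), unitInterval)) : cochainDifferential A i Y (n + 1) σ =
      A.d (Y (n + 1) σ) + (i - n).negOnePow • coboundary Y (n + 1) σ := by
  rw [cochainDifferential, Nat.cast_succ, sub_add_eq_sub_sub, sub_add_cancel]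

lemma shufflePullback_cochainDifferential {n : ℕ} (ρ : C(TopSimplex n, unitInterval)) (i : ℤ)
    (Y : SingularCochain unitInterval A.A) :
    shufflePullback k ρ (cochainDifferential A i Y) =
      cochainDifferential A (i - n) (shufflePullback k ρ Y) +
        (i - n + 1).negOnePow • coboundary (fun _ ρ' => shufflePullback k ρ' Y) n ρ := by
  funext m σ
  have hsign : (i - (n + m : ℕ) + 1).negOnePow * (m : ℤ).negOnePow = (i - n + 1).negOnePow := by
    rw [← Int.negOnePow_add]
    congr 1
    push_cast
    ring
  have heval : coboundary (fun _ ρ' => shufflePullback k ρ' Y m σ) n ρ =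
      coboundary (fun _ ρ' => shufflePullback k ρ' Y) n ρ m σ :=
    (map_coboundary (evalSimplex (M := A.A) k σ).toAddMonoidHom
      (fun _ ρ' => shufflePullback k ρ' Y) n ρ).symm
  calc shufflePullback k ρ (cochainDifferential A i Y) m σ
      = shufflePullback k ρ (fun N τ => A.d (Y N τ)) m σ +
          shufflePullback k ρ ((i - (n + m : ℕ) + 1).negOnePow • coboundary Y) m σ := by
        rw [← Pi.add_apply, ← Pi.add_apply, ← map_add]
        exact shufflePullback_congr ρ σ fun τ => rfl
    _ = A.d (shufflePullback k ρ Y m σ) + (i - (n + m : ℕ) + 1).negOnePow •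
          (coboundary (shufflePullback k ρ Y) m σ + (m : ℤ).negOnePow •
            coboundary (fun _ ρ' => shufflePullback k ρ' Y) n ρ m σ) := by
        rw [← map_shufflePullback, LinearMap.map_smul_of_tower, Pi.smul_apply, Pi.smul_apply,
          shufflePullback_coboundary, heval]
    _ = _ := by
        rw [smul_add, smul_smul, hsign, ← add_assoc, Nat.cast_add, sub_add_eq_sub_sub]
        rfl

lemma shufflePullback_mem_normalizedCochains {n : ℕ} (ρ : C(TopSimplex n, unitInterval)) {i : ℤ}
    {Y : SingularCochain unitInterval A.A} (hY : Y ∈ normalizedCochains A i) :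
    shufflePullback k ρ Y ∈ normalizedCochains A (i - n) :=
  ⟨hY.1.shufflePullback_right ρ, fun m σ => shufflePullback_mem ρ σ fun τ => by
    simpa [sub_sub] using hY.2 (n + m) τ⟩

variable (A B) in
/-- A dg algebra map `A → B ⊗ I*`, where the target is identified with the normalized singular
cochains on `[0,1]` with values in `B`. -/
structure CochainHom where
  toFun : A.A →ₗ[k] SingularCochain unitInterval B.A
  map_gr : ∀ i, ∀ a ∈ A.gr i, toFun a ∈ normalizedCochains B i
  map_one : toFun 1 = constCochain 1
  map_mul : ∀ i j, ∀ a ∈ A.gr i, ∀ b ∈ A.gr j, toFun (a * b) = cupProduct j (toFun a) (toFun b)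
  map_d : ∀ i, ∀ a ∈ A.gr i, toFun (A.d a) = cochainDifferential B i (toFun a)

namespace CochainHom

lemma isNormalized (F : CochainHom A B) (a : A.A) : (F.toFun a).IsNormalized := fun n i τ =>
  LinearMap.congr_fun (DGA.linearMap_ext (v := 0)
    (u := evalSimplex k (τ.comp (degenMap i)) ∘ₗ F.toFun)
    fun j a ha => (F.map_gr j a ha).1 n i τ) a

/-- The composite of a map `A → B ⊗ I*` with evaluation `B ⊗ I* → B` at a point of `[0,1]`. -/
def eval (F : CochainHom A B) (x : SingN unitInterval 0) : DGAHom A B :=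
  DGAHom.ofHomogeneous
    (evalSimplex k x ∘ₗ F.toFun)
    (fun i a ha => by simpa [evalSimplex] using (F.map_gr i a ha).2 0 x)
    (congrFun (congrFun F.map_one 0) x)
    (fun i j a ha b hb =>
      (congrFun (congrFun (F.map_mul i j a ha b hb) 0) x).trans (cupProduct_zero ..))
    (fun i a ha => (congrFun (congrFun (F.map_d i a ha) 0) x).trans (cochainDifferential_zero ..))

theorem stronglyHomotopic_eval (F : CochainHom A B) :
    StronglyHomotopicHoms A B (F.eval const0) (F.eval const1) :=
  Relation.EqvGen.rel _ _ ⟨fun a => F.toFun a,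
    fun a b n σ => congrFun (congrFun (F.toFun.map_add a b) n) σ,
    fun c a n σ => congrFun (congrFun (F.toFun.map_smul c a) n) σ,
    F.isNormalized,
    fun i a ha => (F.map_gr i a ha).2,
    congrFun (congrFun F.map_one 0),
    fun n => congrFun (congrFun F.map_one (n + 1)),
    fun i j a ha b hb n => congrFun (congrFun (F.map_mul i j a ha b hb) n),
    fun i a ha =>
      ⟨fun σ => (congrFun (congrFun (F.map_d i a ha) 0) σ).trans (cochainDifferential_zero ..),
        fun n σ => (congrFun (congrFun (F.map_d i a ha) (n + 1)) σ).trans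
          (cochainDifferential_succ ..)⟩,
    fun _ => ⟨rfl, rfl⟩⟩

lemma decompose_apply (F : CochainHom A B) (a : A.A) (m : ℤ) (n : ℕ)
    (σ : C(TopSimplex n, unitInterval)) :
    (DirectSum.decompose B.gr (F.toFun a n σ) (m - n) : B.A) =
      F.toFun (DirectSum.decompose A.gr a m) n σ := by
  induction a using DirectSum.Decomposition.inductionOn A.gr with
  | zero => simp
  | @homogeneous i a =>
    obtain rfl | him := eq_or_ne i m
    · rw [DirectSum.decompose_coe, DirectSum.of_eq_same,
        DirectSum.decompose_of_mem_same _ ((F.map_gr i a a.2).2 n σ)]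
    · rw [DirectSum.decompose_coe, DirectSum.of_eq_of_ne _ _ _ him.symm,
        DirectSum.decompose_of_mem_ne _ ((F.map_gr i a a.2).2 n σ) (by simpa using him)]
      simp
  | add a b ha hb => simp_all

variable (A) in
/-- The inclusion of constant cochains `A → A ⊗ I*`. -/
def const : CochainHom A A where
  toFun :=
    { toFun := constCochain
      map_add' := fun a b => by funext n σ; cases n <;> simp [constCochain]
      map_smul' := fun c a => by funext n σ; cases n <;> simp [constCochain] }
  map_gr i a ha := by
    refine ⟨fun _ _ _ => rfl, fun n σ => ?_⟩
    cases n with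
    | zero => simpa [constCochain] using ha
    | succ n => exact zero_mem _
  map_one := rfl
  map_mul _ _ _ _ _ _ := (cupProduct_constCochain ..).symm
  map_d i a _ := by
    funext n σ
    cases n <;> simp [cochainDifferential, coboundary_constCochain, constCochain]

/-- A map `X : T → A ⊗ I*` is universal if it is an isomorphism in every degree. -/
def IsUniversal (X : CochainHom T A) : Prop :=
  ∀ m, Set.BijOn X.toFun (T.gr m) (normalizedCochains A m)

namespace IsUniversal

variable {X : CochainHom T A}

lemma injective (hX : X.IsUniversal) : Function.Injective X.toFun := by
  refine (injective_iff_map_eq_zero X.toFun).2 fun p hp => ?_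
  have hzero (m : ℤ) : (DirectSum.decompose T.gr p m : T.A) = 0 := by
    refine (hX m).injOn (SetLike.coe_mem _) (zero_mem _) ?_
    funext n σ
    rw [← X.decompose_apply, hp, map_zero]
    simp
  refine (DirectSum.decompose T.gr).injective (DFinsupp.ext fun m => Subtype.ext ?_)
  rw [hzero, DirectSum.decompose_zero]
  rfl

lemma mem_gr (hX : X.IsUniversal) {p : T.A} {m : ℤ}
    (hp : X.toFun p ∈ normalizedCochains A m) : p ∈ T.gr m := by
  obtain ⟨q, hq, hqp⟩ := (hX m).surjOn hp
  exact hX.injective hqp ▸ hq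

lemma mem_range (hX : X.IsUniversal) {Y : SingularCochain unitInterval A.A} {m : ℤ}
    (hY : Y ∈ normalizedCochains A m) : Y ∈ LinearMap.range X.toFun :=
  let ⟨p, _, hp⟩ := (hX m).surjOn hY
  ⟨p, hp⟩

lemma hom_ext (hX : X.IsUniversal) {f g : DGAHom B T}
    (h : ∀ b, X.toFun (f.toFun b) = X.toFun (g.toFun b)) : f = g :=
  DGAHom.ext fun b => hX.injective (h b)

variable (hX : X.IsUniversal)

/-- The factorization through `X` of a linear map into cochains. -/
noncomputable def liftLinear {M : Type*} [AddCommGroup M] [Module k M]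
    (F : M →ₗ[k] SingularCochain unitInterval A.A)
    (hF : ∀ b, F b ∈ LinearMap.range X.toFun) : M →ₗ[k] T.A :=
  (LinearEquiv.ofInjective X.toFun hX.injective).symm ∘ₗ F.codRestrict _ hF

lemma apply_liftLinear {M : Type*} [AddCommGroup M] [Module k M]
    (F : M →ₗ[k] SingularCochain unitInterval A.A)
    (hF : ∀ b, F b ∈ LinearMap.range X.toFun) (b : M) :
    X.toFun (hX.liftLinear F hF b) = F b :=
  LinearEquiv.ofInjective_symm_apply (f := X.toFun) (h := hX.injective) (F.codRestrict _ hF b)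

/-- The map of dg algebras `B → T` corresponding to a map `B → A ⊗ I*`. -/
noncomputable def lift (F : CochainHom B A) : DGAHom B T :=
  have hF b : F.toFun b ∈ LinearMap.range X.toFun :=
    DGA.map_mem (fun i b hb => hX.mem_range (F.map_gr i b hb)) b
  have hgr : ∀ i, ∀ b ∈ B.gr i, hX.liftLinear F.toFun hF b ∈ T.gr i := fun i b hb =>
    hX.mem_gr <| by rw [apply_liftLinear]; exact F.map_gr i b hb
  DGAHom.ofHomogeneous (hX.liftLinear F.toFun hF) hgr
    (hX.injective <| by rw [apply_liftLinear, F.map_one, X.map_one])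
    (fun i j a ha b hb => hX.injective <| by
      rw [X.map_mul i j _ (hgr i a ha) _ (hgr j b hb)]
      simp only [apply_liftLinear, F.map_mul i j a ha b hb])
    (fun i a ha => hX.injective <| by
      rw [X.map_d i _ (hgr i a ha)]
      simp only [apply_liftLinear, F.map_d i a ha])

lemma apply_lift (F : CochainHom B A) (b : B.A) : X.toFun ((hX.lift F).toFun b) = F.toFun b :=
  hX.apply_liftLinear F.toFun _ b

/-- The value of the contracting homotopy of `A ⊗ I*` on a simplex `ρ`. -/
noncomputable def contractionComponent {n : ℕ} (ρ : C(TopSimplex n, unitInterval)) :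
    T.A →ₗ[k] T.A :=
  hX.liftLinear (shufflePullback k ρ ∘ₗ X.toFun) <| DGA.map_mem fun i p hp =>
    hX.mem_range (shufflePullback_mem_normalizedCochains ρ (X.map_gr i p hp))

section ContractionComponent

variable {n : ℕ} (ρ : C(TopSimplex n, unitInterval))

lemma apply_contractionComponent (p : T.A) :
    X.toFun (hX.contractionComponent ρ p) = shufflePullback k ρ (X.toFun p) :=
  hX.apply_liftLinear ..

lemma contractionComponent_mem {i : ℤ} {p : T.A} (hp : p ∈ T.gr i) :
    hX.contractionComponent ρ p ∈ T.gr (i - n) := hX.mem_gr <| by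
  rw [apply_contractionComponent]
  exact shufflePullback_mem_normalizedCochains ρ (X.map_gr i p hp)

lemma contractionComponent_mul {i j : ℤ} {p q : T.A} (hp : p ∈ T.gr i) (hq : q ∈ T.gr j) :
    hX.contractionComponent ρ (p * q) = cupProduct j (fun _ ρ' => hX.contractionComponent ρ' p)
      (fun _ ρ' => hX.contractionComponent ρ' q) n ρ := by
  refine hX.injective ?_
  rw [apply_contractionComponent, X.map_mul i j p hp q hq, shufflePullback_cupProduct, cupProduct,
    map_sum]
  refine Finset.sum_congr rfl fun r _ => ?_
  rw [LinearMap.map_smul_of_tower, ← Nat.cast_sub (Nat.le_of_lt_succ r.isLt),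
    X.map_mul _ _ _ (hX.contractionComponent_mem _ hp) _ (hX.contractionComponent_mem _ hq),
    apply_contractionComponent, apply_contractionComponent]

lemma contractionComponent_d {i : ℤ} {p : T.A} (hp : p ∈ T.gr i) :
    hX.contractionComponent ρ (T.d p) =
      cochainDifferential T i (fun _ ρ' => hX.contractionComponent ρ' p) n ρ := by
  refine hX.injective ?_
  have hcoboundary : X.toFun (coboundary (fun _ ρ' => hX.contractionComponent ρ' p) n ρ) =
      coboundary (fun _ ρ' => shufflePullback k ρ' (X.toFun p)) n ρ := by
    simp only [← hX.apply_contractionComponent]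
    exact map_coboundary X.toFun.toAddMonoidHom (fun _ ρ' => hX.contractionComponent ρ' p) n ρ
  rw [apply_contractionComponent, X.map_d i p hp, shufflePullback_cochainDifferential,
    cochainDifferential, map_add, X.map_d _ _ (hX.contractionComponent_mem ρ hp),
    apply_contractionComponent, LinearMap.map_smul_of_tower, hcoboundary]

end ContractionComponent

/-- The homotopy `A ⊗ I* → A ⊗ I* ⊗ I*` contracting `A ⊗ I*` onto the constant cochains. -/
noncomputable def contraction : CochainHom T T where
  toFun := LinearMap.pi fun _ => LinearMap.pi fun ρ => hX.contractionComponent ρ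
  map_gr _ p hp := by
    refine ⟨fun n i ρ => hX.injective ?_, fun n ρ => hX.contractionComponent_mem ρ hp⟩
    rw [map_zero]
    exact (hX.apply_contractionComponent ..).trans
      ((X.isNormalized p).shufflePullback_left n i ρ)
  map_one := by
    funext n ρ
    refine hX.injective ((hX.apply_contractionComponent ρ 1).trans ?_)
    rw [X.map_one, shufflePullback_constCochain]
    cases n
    · exact X.map_one.symm
    · exact (map_zero X.toFun).symm
  map_mul _ _ _ hp _ hq := funext fun _ => funext fun ρ => hX.contractionComponent_mul ρ hp hq
  map_d _ _ hp := funext fun _ => funext fun ρ => hX.contractionComponent_d ρ hp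

lemma contraction_eval_const1 : hX.contraction.eval const1 = DGAHom.id' T :=
  hX.hom_ext fun _ => (hX.apply_contractionComponent ..).trans (shufflePullback_const_one _)

lemma contraction_eval_const0 :
    hX.contraction.eval const0 = (hX.lift (const A)).comp (X.eval const0) :=
  hX.hom_ext fun p => (hX.apply_contractionComponent ..).trans <|
    (X.isNormalized p).shufflePullback_const_zero.trans
      (hX.apply_lift (const A) _).symm

lemma eval_comp_lift_const (x : SingN unitInterval 0) :
    (X.eval x).comp (hX.lift (const A)) = DGAHom.id' A :=
  DGAHom.ext fun a => congrFun (congrFun (hX.apply_lift (const A) a) 0) x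

end IsUniversal
end CochainHom

namespace IsCochainTensorI

lemma exists_isUniversal (h : IsCochainTensorI A T) : ∃ X : CochainHom T A, X.IsUniversal := by
  obtain ⟨E, hadd, hsmul, hdegen, hgr, hinj, hsurj, hone, hone', hmul, hd⟩ := h
  let X : CochainHom T A :=
    { toFun :=
        { toFun := E
          map_add' := fun p q => funext fun n => funext (hadd p q n)
          map_smul' := fun c p => funext fun n => funext (hsmul c p n) }
      map_gr := fun i p hp => ⟨hdegen p, hgr i p hp⟩
      map_one := by
        funext n σ
        cases n with
        | zero => exact hone σ
        | succ n => exact hone' n σ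
      map_mul := fun i j p hp q hq => funext fun n => funext (hmul i j p hp q hq n)
      map_d := fun i p hp => by
        funext n σ
        cases n with
        | zero => exact ((hd i p hp).1 σ).trans (cochainDifferential_zero ..).symm
        | succ n => exact ((hd i p hp).2 n σ).trans (cochainDifferential_succ ..).symm }
  refine ⟨X, fun m => ⟨X.map_gr m, fun p hp q hq hpq => sub_eq_zero.1 ?_, fun Y hY => ?_⟩⟩
  · have hzero : X.toFun (p - q) = 0 := by rw [map_sub, hpq, sub_self]
    exact hinj m _ (sub_mem hp hq) fun n => congrFun (congrFun hzero n)
  · obtain ⟨p, hp, hpY⟩ := hsurj m Y hY.2 hY.1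
    exact ⟨p, hp, funext fun n => funext (hpY n)⟩

theorem stronglyHomotopyEquivalent (h : IsCochainTensorI A T) : StronglyHomotopyEquivalent A T := by
  obtain ⟨X, hX⟩ := h.exists_isUniversal
  refine ⟨hX.lift (CochainHom.const A), X.eval const0, ?_, ?_⟩
  · rw [← hX.contraction_eval_const0, ← hX.contraction_eval_const1]
    exact hX.contraction.stronglyHomotopic_eval
  · rw [hX.eval_comp_lift_const]
    exact Relation.EqvGen.refl _

end IsCochainTensorI

end DGAlgebras

/-- **Theorem.** Any dg algebra `A` over a commutative ring `k` is strongly homotopy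
equivalent to `A ⊗ I*`, where `I*` is the normalized cochain dg algebra of the singular
simplicial set of `[0,1]` (stated for any dg algebra `T` realizing the completed tensor
product `A ⊗ I*`); in particular, `I*` is strongly homotopy equivalent to `k`. -/
theorem dga_strongly_homotopy_equivalent_to_tensor_with_I
    {k : Type} [CommRing k] :
    (∀ A T : DGA k, IsCochainTensorI A T → StronglyHomotopyEquivalent A T) ∧
    (∀ J : DGA k, IsCochainTensorI (DGA.triv k) J →
      StronglyHomotopyEquivalent J (DGA.triv k)) :=
  ⟨fun _ _ h => h.stronglyHomotopyEquivalent, fun _ h => h.stronglyHomotopyEquivalent.symm⟩
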